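/- Global Laplacian error estimate for PUM approximation: under the boundary condition ∇_L φ⁽ʲ⁾(e) = 0 on all edges leaving V_j, and local bounds ‖x − x_*⁽ʲ⁾‖_{ℒᵖ(G_j)} ≤ E_{j,0}, ‖∇_{L⁽ʲ⁾}(x − x_*⁽ʲ⁾)‖_{ℒᵖ(E_j)} ≤ E_{j,1}, ‖L⁽ʲ⁾(x − x_*⁽ʲ⁾)‖_{ℒᵖ(G_j)} ≤ E_{j,2}, the global approximant x_* = ∑_j φ⁽ʲ⁾ x_*⁽ʲ⁾ satisfies ‖Lx − Lx_*‖_{ℒᵖ(G)} ≤ ∑_{j=1}^J ( E_{j,2} + ‖∇_L φ⁽ʲ⁾‖_{ℒ^{∞,q}(E)} E_{j,1} + ‖L_S φ⁽ʲ⁾‖_{ℒ^∞(G)} E_{j,0} ), where 1/p + 1/q = 1. -/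

import Mathlib

open Matrix
open scoped ENNReal

/-- `ℒᵖ` norm of a signal restricted to a vertex subset `S` (`max` for `p = ∞`). -/
noncomputable def lpSub {n : ℕ} (p : ℝ≥0∞) (S : Finset (Fin n)) (x : Fin n → ℝ) : ℝ :=
  if p = ∞ then ⨆ v : S, |x v| else (∑ v ∈ S, |x v| ^ p.toReal) ^ (1 / p.toReal)

/-- `ℒᵖ` norm of a function on a (directed) edge set `E`. -/
noncomputable def lpEdge {n : ℕ} (p : ℝ≥0∞) (E : Finset (Fin n × Fin n))
    (z : Fin n × Fin n → ℝ) : ℝ :=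
  if p = ∞ then ⨆ e : E, |z e| else (∑ e ∈ E, |z e| ^ p.toReal) ^ (1 / p.toReal)

/-- Hybrid norm `‖z‖_{ℒ^{∞,q}(E)} = max_i (∑_{i' : (i,i') ∈ E} |z(i,i')|^q)^{1/q}`. -/
noncomputable def lpHybrid {n : ℕ} (q : ℝ≥0∞) (E : Finset (Fin n × Fin n))
    (z : Fin n × Fin n → ℝ) : ℝ :=
  ⨆ i : Fin n, lpEdge q (E.filter fun e => e.1 = i) z

/-!
As the `φ j` sum to one, `L x - L x_*` is the sum over `j` of `L (φ j * d j)`, where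
`d j = x - x_*⁽ʲ⁾`. Since `φ j` is supported in `V_j`, one may replace `d j` by its extension by
zero `d'` from `V_j`, and the discrete Leibniz rule reads
`L (φ j * d') = φ j * L d' + d' * L_S (φ j) - Γ(φ j, d')`.
The first term is at most `|L⁽ʲ⁾ (d j)|` because `|φ j| ≤ 1`, and the second is at most
`‖L_S (φ j)‖_∞ |d j|`. By the boundary condition, only edges inside `V_j` contribute to
`Γ(φ j, d')`, where `d'` and `d j` have the same gradient; Hölder's inequality over the edges
leaving each vertex then bounds the third term by the hybrid norm of `∇φ j` times the `ℒᵖ` norm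
of `∇d j`.
-/

section FinsetLpNorm

variable {ι κ E F : Type*} [SeminormedAddCommGroup E] [SeminormedAddCommGroup F] {p q : ℝ≥0∞}

/-- The `ℓᵖ` norm of the restriction of `f` to the finite set `S`. Going through `PiLp` supplies the
triangle inequality and homogeneity when `1 ≤ p`. -/
noncomputable def finsetLpNorm (p : ℝ≥0∞) (S : Finset ι) (f : ι → E) : ℝ :=
  ‖WithLp.toLp p fun i : S => f i‖

theorem finsetLpNorm_top (S : Finset ι) (f : ι → E) : finsetLpNorm ∞ S f = ⨆ i : S, ‖f i‖ :=
  rfl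

theorem finsetLpNorm_eq_sum (hp : 0 < p.toReal) (S : Finset ι) (f : ι → E) :
    finsetLpNorm p S f = (∑ i ∈ S, ‖f i‖ ^ p.toReal) ^ (1 / p.toReal) := by
  rw [finsetLpNorm, PiLp.norm_eq_sum hp, ← Finset.sum_coe_sort S]

section Fact

variable [Fact (1 ≤ p)]

theorem finsetLpNorm_nonneg (S : Finset ι) (f : ι → E) : 0 ≤ finsetLpNorm p S f :=
  norm_nonneg _

theorem norm_le_finsetLpNorm {S : Finset ι} (f : ι → E) {i : ι} (hi : i ∈ S) :
    ‖f i‖ ≤ finsetLpNorm p S f :=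
  PiLp.norm_apply_le (WithLp.toLp p fun i : S => f i) ⟨i, hi⟩

theorem finsetLpNorm_eq_ite (S : Finset ι) (f : ι → E) :
    finsetLpNorm p S f =
      if p = ∞ then ⨆ i : S, ‖f i‖ else (∑ i ∈ S, ‖f i‖ ^ p.toReal) ^ (1 / p.toReal) := by
  split_ifs with h
  · rw [h, finsetLpNorm_top]
  · exact finsetLpNorm_eq_sum (zero_lt_one.trans_le (p.dichotomy.resolve_left h)) S f

theorem finsetLpNorm_add_le (S : Finset ι) (f g : ι → E) :
    finsetLpNorm p S (f + g) ≤ finsetLpNorm p S f + finsetLpNorm p S g :=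
  norm_add_le (WithLp.toLp p fun i : S => f i) (WithLp.toLp p fun i : S => g i)

theorem finsetLpNorm_sub_le (S : Finset ι) (f g : ι → E) :
    finsetLpNorm p S (f - g) ≤ finsetLpNorm p S f + finsetLpNorm p S g :=
  norm_sub_le (WithLp.toLp p fun i : S => f i) (WithLp.toLp p fun i : S => g i)

theorem finsetLpNorm_zero (S : Finset ι) : finsetLpNorm p S (0 : ι → E) = 0 :=
  norm_zero (E := PiLp p fun _ : S => E)

theorem finsetLpNorm_sum_le (S : Finset ι) (T : Finset κ) (f : κ → ι → E) :
    finsetLpNorm p S (∑ j ∈ T, f j) ≤ ∑ j ∈ T, finsetLpNorm p S (f j) :=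
  Finset.le_sum_of_subadditive _ (finsetLpNorm_zero S).le (finsetLpNorm_add_le S) T f

theorem finsetLpNorm_smul {𝕜 : Type*} [NormedField 𝕜] [NormedSpace 𝕜 E] (S : Finset ι) (c : 𝕜)
    (f : ι → E) : finsetLpNorm p S (c • f) = ‖c‖ * finsetLpNorm p S f :=
  norm_smul c (WithLp.toLp p fun i : S => f i)

theorem finsetLpNorm_le_finsetLpNorm {S T : Finset ι} {f : ι → E} {g : ι → F}
    (hzero : ∀ i ∈ S, i ∉ T → f i = 0) (hle : ∀ i ∈ S, i ∈ T → ‖f i‖ ≤ ‖g i‖) :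
    finsetLpNorm p S f ≤ finsetLpNorm p T g := by
  classical
  obtain rfl | hp := p.dichotomy
  · rw [finsetLpNorm_top]
    refine Real.iSup_le (fun i => ?_) (finsetLpNorm_nonneg T g)
    by_cases hi : i.1 ∈ T
    · exact (hle i i.2 hi).trans (norm_le_finsetLpNorm g hi)
    · simpa [hzero i i.2 hi] using finsetLpNorm_nonneg T g
  · have hp0 : 0 < p.toReal := by linarith
    rw [finsetLpNorm_eq_sum hp0, finsetLpNorm_eq_sum hp0]
    gcongr
    calc ∑ i ∈ S, ‖f i‖ ^ p.toReal = ∑ i ∈ S ∩ T, ‖f i‖ ^ p.toReal := by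
          refine (Finset.sum_subset Finset.inter_subset_left fun i hS hST => ?_).symm
          rw [hzero i hS fun hT => hST (Finset.mem_inter.2 ⟨hS, hT⟩), norm_zero,
            Real.zero_rpow hp0.ne']
      _ ≤ ∑ i ∈ S ∩ T, ‖g i‖ ^ p.toReal := by
          refine Finset.sum_le_sum fun i hi => ?_
          obtain ⟨hS, hT⟩ := Finset.mem_inter.1 hi
          exact Real.rpow_le_rpow (norm_nonneg _) (hle i hS hT) hp0.le
      _ ≤ ∑ i ∈ T, ‖g i‖ ^ p.toReal :=
          Finset.sum_le_sum_of_subset_of_nonneg Finset.inter_subset_right fun _ _ _ => by positivity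

theorem finsetLpNorm_le_mul [NormedSpace ℝ F] {S T : Finset ι} {f : ι → E} {g : ι → F} {c : ℝ}
    (hc : 0 ≤ c) (hzero : ∀ i ∈ S, i ∉ T → f i = 0)
    (hle : ∀ i ∈ S, i ∈ T → ‖f i‖ ≤ c * ‖g i‖) :
    finsetLpNorm p S f ≤ c * finsetLpNorm p T g := by
  rw [← Real.norm_of_nonneg hc, ← finsetLpNorm_smul]
  refine finsetLpNorm_le_finsetLpNorm hzero fun i hS hT => ?_
  rw [Pi.smul_apply, norm_smul, Real.norm_of_nonneg hc]
  exact hle i hS hT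

theorem finsetLpNorm_fiberwise_le [Fintype κ] [DecidableEq κ] (S : Finset ι) (π : ι → κ)
    (f : ι → E) :
    finsetLpNorm p Finset.univ (fun k => finsetLpNorm p {i ∈ S | π i = k} f) ≤
      finsetLpNorm p S f := by
  obtain rfl | hp := p.dichotomy
  · rw [finsetLpNorm_top]
    refine Real.iSup_le (fun k => ?_) (finsetLpNorm_nonneg S f)
    rw [Real.norm_of_nonneg (finsetLpNorm_nonneg _ f)]
    exact finsetLpNorm_le_finsetLpNorm
      (fun i hi hiS => absurd (Finset.mem_filter.1 hi).1 hiS) fun _ _ _ => le_rfl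
  · have hp0 : 0 < p.toReal := by linarith
    simp_rw [finsetLpNorm_eq_sum hp0]
    rw [← Finset.sum_fiberwise S π]
    gcongr with k
    rw [Real.norm_of_nonneg (by positivity), one_div, Real.rpow_inv_rpow (by positivity) hp0.ne']

end Fact

theorem norm_sum_mul_le_finsetLpNorm_mul {𝕜 : Type*} [RCLike 𝕜] [hpq : p.HolderConjugate q]
    (S : Finset ι) (f g : ι → 𝕜) :
    ‖∑ i ∈ S, f i * g i‖ ≤ finsetLpNorm p S f * finsetLpNorm q S g := by
  have : Fact (1 ≤ p) := ⟨ENNReal.HolderConjugate.one_le p q⟩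
  have : Fact (1 ≤ q) := ⟨ENNReal.HolderConjugate.one_le q p⟩
  let toLp (r : ℝ≥0∞) (h : ι → 𝕜) : lp (fun _ : S => 𝕜) r :=
    Equiv.lpPiLp.symm (WithLp.toLp r fun i : S => h i)
  have norm_toLp (r : ℝ≥0∞) (h : ι → 𝕜) : ‖toLp r h‖ = finsetLpNorm r S h := by
    rw [← equiv_lpPiLp_norm, Equiv.apply_symm_apply, finsetLpNorm]
  have hB : ∀ _ : S, ‖ContinuousLinearMap.mul 𝕜 𝕜‖ ≤ (1 : NNReal) := fun _ => by simp
  let pairing := lp.dualPairing p q (fun _ : S => ContinuousLinearMap.mul 𝕜 𝕜) hB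
  calc ‖∑ i ∈ S, f i * g i‖ = ‖pairing (toLp p f) (toLp q g)‖ := by
        rw [lp.dualPairing_apply, tsum_fintype, ← Finset.sum_coe_sort S]
        rfl
    _ ≤ 1 * ‖toLp p f‖ * ‖toLp q g‖ :=
        pairing.le_of_opNorm₂_le_of_le (lp.norm_dualPairing _ hB) le_rfl le_rfl
    _ = finsetLpNorm p S f * finsetLpNorm q S g := by rw [one_mul, norm_toLp, norm_toLp]

/-- The mixed norm of `f` on `S`: the supremum over `k` of the `ℓ^q` norms of `f` on the fibres
`{i ∈ S | π i = k}`. The hybrid edge norm `ℒ^{∞,q}(E)` is the case `π = Prod.fst`. -/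
noncomputable def hybridLpNorm [DecidableEq κ] (q : ℝ≥0∞) (S : Finset ι) (π : ι → κ)
    (f : ι → E) : ℝ :=
  ⨆ k, finsetLpNorm q {i ∈ S | π i = k} f

section Hybrid

variable [DecidableEq κ] [Fact (1 ≤ q)]

theorem hybridLpNorm_nonneg (S : Finset ι) (π : ι → κ) (f : ι → E) : 0 ≤ hybridLpNorm q S π f :=
  Real.iSup_nonneg fun _ => finsetLpNorm_nonneg _ f

theorem finsetLpNorm_fiber_le_hybridLpNorm [Finite κ] {S T : Finset ι} (hST : S ⊆ T) (π : ι → κ)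
    (f : ι → E) (k : κ) : finsetLpNorm q {i ∈ S | π i = k} f ≤ hybridLpNorm q T π f := by
  refine le_trans ?_ (le_ciSup (Set.finite_range _).bddAbove k)
  exact finsetLpNorm_le_finsetLpNorm
    (fun i hi hiT => absurd (Finset.filter_subset_filter _ hST hi) hiT) fun _ _ _ => le_rfl

end Hybrid

theorem finsetLpNorm_fiberwise_sum_mul_le {𝕜 : Type*} [RCLike 𝕜] [Fintype κ] [DecidableEq κ]
    [p.HolderConjugate q] {S T : Finset ι} (hST : S ⊆ T) (π : ι → κ) (f g : ι → 𝕜) :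
    finsetLpNorm p Finset.univ (fun k => ∑ i ∈ S with π i = k, f i * g i) ≤
      hybridLpNorm q T π f * finsetLpNorm p S g := by
  have : Fact (1 ≤ p) := ⟨ENNReal.HolderConjugate.one_le p q⟩
  have : Fact (1 ≤ q) := ⟨ENNReal.HolderConjugate.one_le q p⟩
  have : q.HolderConjugate p := .symm
  have fiber_bound (k : κ) : ‖∑ i ∈ S with π i = k, f i * g i‖ ≤
      hybridLpNorm q T π f * finsetLpNorm p {i ∈ S | π i = k} g :=
    (norm_sum_mul_le_finsetLpNorm_mul _ f g).trans <| mul_le_mul_of_nonneg_right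
      (finsetLpNorm_fiber_le_hybridLpNorm hST π f k) (finsetLpNorm_nonneg _ g)
  have hT : 0 ≤ hybridLpNorm q T π f := hybridLpNorm_nonneg T π f
  calc finsetLpNorm p Finset.univ (fun k => ∑ i ∈ S with π i = k, f i * g i)
      ≤ hybridLpNorm q T π f *
          finsetLpNorm p Finset.univ fun k => finsetLpNorm p {i ∈ S | π i = k} g := by
        refine finsetLpNorm_le_mul hT (fun k _ hk => absurd (Finset.mem_univ k) hk) fun k _ _ => ?_
        rw [Real.norm_of_nonneg (finsetLpNorm_nonneg _ g)]
        exact fiber_bound k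
    _ ≤ hybridLpNorm q T π f * finsetLpNorm p S g := by
        gcongr
        exact finsetLpNorm_fiberwise_le S π g

end FinsetLpNorm

section Leibniz

variable {V R : Type*} [CommRing R]

/-- The action on signals of the principal submatrix `L⁽ʲ⁾` of `L` with index set `S`, evaluated at
every vertex rather than only at those of `S`. -/
def localLaplacian (L : Matrix V V R) (S : Finset V) (f : V → R) (v : V) : R :=
  ∑ w ∈ S, L v w * f w

theorem mulVec_indicator [Fintype V] (L : Matrix V V R) (S : Finset V) (f : V → R) :
    L *ᵥ (S : Set V).indicator f = localLaplacian L S f := by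
  classical
  ext v
  simp only [Matrix.mulVec, dotProduct, localLaplacian, Set.indicator_apply, Finset.mem_coe,
    mul_ite, mul_zero, Finset.sum_ite_mem, Finset.univ_inter]

theorem mulVec_sub_mulVec_sum_mul {κ : Type*} [Fintype V] [Fintype κ] (L : Matrix V V R)
    {φ : κ → V → R} (hφsum : ∀ v, ∑ j, φ j v = 1) (x : V → R) (y : κ → V → R) :
    L *ᵥ x - L *ᵥ (fun u => ∑ j, φ j u * y j u) = ∑ j, L *ᵥ (φ j * (x - y j)) := by
  rw [← Matrix.mulVec_sub, ← Matrix.mulVec_sum]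
  congr 1
  ext v
  simp only [Pi.sub_apply, Finset.sum_apply, Pi.mul_apply, mul_sub, Finset.sum_sub_distrib,
    ← Finset.sum_mul, hφsum, one_mul]

variable [DecidableEq V]

/-- The weighted adjacency matrix `A` of a graph Laplacian: minus the off-diagonal part of `L`. -/
def weightMatrix (L : Matrix V V R) : Matrix V V R :=
  Matrix.of fun a b => if a ≠ b then -L a b else 0

theorem weightMatrix_isSymm {L : Matrix V V R} (hsymm : L.IsSymm) : (weightMatrix L).IsSymm :=
  Matrix.IsSymm.ext fun a b => by simp only [weightMatrix, Matrix.of_apply, ne_comm, hsymm.apply]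

theorem weightMatrix_nonneg [PartialOrder R] [IsOrderedAddMonoid R] {L : Matrix V V R}
    (hoff : ∀ i j, i ≠ j → L i j ≤ 0) (a b : V) : 0 ≤ weightMatrix L a b := by
  rw [weightMatrix, Matrix.of_apply]
  split_ifs with h
  · exact neg_nonneg.2 (hoff a b h)
  · exact le_rfl

variable [Fintype V]

/-- The standard Laplacian `L_S = D - A` associated with `L`. -/
def standardLaplacian (L : Matrix V V R) : Matrix V V R :=
  Matrix.diagonal (fun a => ∑ b, weightMatrix L a b) - weightMatrix L

/-- The carré du champ `Γ(f, g)`, the pointwise pairing of the gradients of `f` and `g` (without the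
customary factor `1/2`): the defect in the Leibniz rule for `L`. -/
def carreDuChamp (L : Matrix V V R) (f g : V → R) (v : V) : R :=
  ∑ w, weightMatrix L v w * ((f v - f w) * (g v - g w))

theorem standardLaplacian_mulVec_apply (L : Matrix V V R) (f : V → R) (v : V) :
    (standardLaplacian L *ᵥ f) v = ∑ w, weightMatrix L v w * (f v - f w) := by
  rw [standardLaplacian, Matrix.sub_mulVec, Pi.sub_apply, Matrix.mulVec_diagonal, Finset.sum_mul]
  simp only [Matrix.mulVec, dotProduct, mul_sub, Finset.sum_sub_distrib]

theorem mulVec_mul_leibniz (L : Matrix V V R) (f g : V → R) :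
    L *ᵥ (f * g) = f * (L *ᵥ g) + g * (standardLaplacian L *ᵥ f) - carreDuChamp L f g := by
  ext v
  have weight_mul_sub (w : V) : weightMatrix L v w * (f v - f w) = L v w * (f w - f v) := by
    obtain rfl | h := eq_or_ne v w
    · simp
    · simp only [weightMatrix, Matrix.of_apply, if_pos h]
      ring
  simp only [Pi.add_apply, Pi.sub_apply, Pi.mul_apply, standardLaplacian_mulVec_apply]
  simp only [carreDuChamp, Matrix.mulVec, dotProduct, Pi.mul_apply, Finset.mul_sum,
    ← Finset.sum_add_distrib, ← Finset.sum_sub_distrib]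
  refine Finset.sum_congr rfl fun w _ => ?_
  linear_combination (-g w) * weight_mul_sub w

end Leibniz

section Gradient

variable {V : Type*} [DecidableEq V] {L : Matrix V V ℝ} {S : Finset V}

/-- The gradient `∇_L` of a signal; it is only meaningful for nonnegative weights, as `Real.sqrt`
vanishes at negative reals. -/
noncomputable def graphGradient (L : Matrix V V ℝ) (f : V → ℝ) (e : V × V) : ℝ :=
  Real.sqrt (weightMatrix L e.1 e.2) * (f e.1 - f e.2)

theorem graphGradient_swap (hsymm : L.IsSymm) (f : V → ℝ) (e : V × V) :
    graphGradient L f e.swap = -graphGradient L f e := by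
  simp only [graphGradient, Prod.fst_swap, Prod.snd_swap, (weightMatrix_isSymm hsymm).apply e.1 e.2]
  ring

variable [Fintype V]

/-- The edges of the graph of `L`, as ordered pairs: an undirected edge occurs in both
orientations. -/
noncomputable def graphEdges (L : Matrix V V ℝ) : Finset (V × V) :=
  {e | weightMatrix L e.1 e.2 ≠ 0}

/-- The edges of the subgraph induced on `S`. -/
noncomputable def inducedEdges (L : Matrix V V ℝ) (S : Finset V) : Finset (V × V) :=
  {e ∈ graphEdges L | e.1 ∈ S ∧ e.2 ∈ S}

theorem swap_mem_graphEdges (hsymm : L.IsSymm) {e : V × V} (he : e ∈ graphEdges L) :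
    e.swap ∈ graphEdges L := by
  simpa [graphEdges, (weightMatrix_isSymm hsymm).apply e.1 e.2] using he

theorem graphGradient_eq_zero_of_cross (hsymm : L.IsSymm) {φ : V → ℝ}
    (hbd : ∀ e ∈ graphEdges L, e.1 ∈ S → e.2 ∉ S → graphGradient L φ e = 0) {e : V × V}
    (he : e ∈ graphEdges L) (hcross : ¬(e.1 ∈ S ↔ e.2 ∈ S)) : graphGradient L φ e = 0 := by
  by_cases h1 : e.1 ∈ S
  · exact hbd e he h1 fun h2 => hcross (iff_of_true h1 h2)
  · have h2 : e.2 ∈ S := by_contra fun h2 => hcross (iff_of_false h1 h2)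
    rw [← neg_eq_zero, ← graphGradient_swap hsymm]
    exact hbd e.swap (swap_mem_graphEdges hsymm he) h2 h1

theorem carreDuChamp_eq_sum_graphGradient (hoff : ∀ i j, i ≠ j → L i j ≤ 0) (f g : V → ℝ) (v : V) :
    carreDuChamp L f g v =
      ∑ e ∈ graphEdges L with e.1 = v, graphGradient L f e * graphGradient L g e := by
  have gradient_mul (w : V) : graphGradient L f (v, w) * graphGradient L g (v, w) =
      weightMatrix L v w * ((f v - f w) * (g v - g w)) := by
    rw [graphGradient, graphGradient, mul_mul_mul_comm,
      Real.mul_self_sqrt (weightMatrix_nonneg hoff v w)]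
  rw [graphEdges, Finset.filter_filter, Finset.sum_filter, Fintype.sum_prod_type,
    Fintype.sum_eq_single v fun a ha => by simp [ha]]
  refine Finset.sum_congr rfl fun w _ => ?_
  rw [gradient_mul]
  split_ifs with h
  · rfl
  · simp_all

theorem graphGradient_eq_zero_of_notMem_inducedEdges {φ : V → ℝ} (hφsupp : ∀ v, φ v ≠ 0 → v ∈ S)
    (hbd : ∀ e ∈ graphEdges L, ¬(e.1 ∈ S ↔ e.2 ∈ S) → graphGradient L φ e = 0) {e : V × V}
    (he : e ∈ graphEdges L) (heS : e ∉ inducedEdges L S) : graphGradient L φ e = 0 := by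
  by_cases hcross : e.1 ∈ S ↔ e.2 ∈ S
  · have h1 : e.1 ∉ S := fun h => heS (Finset.mem_filter.2 ⟨he, h, hcross.1 h⟩)
    have h2 : e.2 ∉ S := fun h => h1 (hcross.2 h)
    rw [graphGradient, not_imp_comm.1 (hφsupp _) h1, not_imp_comm.1 (hφsupp _) h2, sub_self,
      mul_zero]
  · exact hbd e he hcross

theorem carreDuChamp_indicator_eq_sum_inducedEdges (hoff : ∀ i j, i ≠ j → L i j ≤ 0) {φ : V → ℝ}
    (hφsupp : ∀ v, φ v ≠ 0 → v ∈ S)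
    (hbd : ∀ e ∈ graphEdges L, ¬(e.1 ∈ S ↔ e.2 ∈ S) → graphGradient L φ e = 0) (d : V → ℝ) (v : V) :
    carreDuChamp L φ ((S : Set V).indicator d) v =
      ∑ e ∈ inducedEdges L S with e.1 = v, graphGradient L φ e * graphGradient L d e := by
  have gradient_indicator {e : V × V} (he : e ∈ inducedEdges L S) :
      graphGradient L ((S : Set V).indicator d) e = graphGradient L d e := by
    obtain ⟨-, h1, h2⟩ := Finset.mem_filter.1 he
    simp only [graphGradient, Set.indicator_of_mem (Finset.mem_coe.2 h1),
      Set.indicator_of_mem (Finset.mem_coe.2 h2)]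
  rw [carreDuChamp_eq_sum_graphGradient hoff, eq_comm]
  refine Finset.sum_subset_zero_on_sdiff
    (Finset.filter_subset_filter _ (Finset.filter_subset _ _)) (fun e he => ?_) fun e he => ?_
  · obtain ⟨he, heS⟩ := Finset.mem_sdiff.1 he
    obtain ⟨heE, hev⟩ := Finset.mem_filter.1 he
    rw [graphGradient_eq_zero_of_notMem_inducedEdges hφsupp hbd heE
      fun h => heS (Finset.mem_filter.2 ⟨h, hev⟩), zero_mul]
  · rw [gradient_indicator (Finset.mem_filter.1 he).1]

end Gradient

section ErrorEstimate

variable {V : Type*} [Fintype V] [DecidableEq V] {L : Matrix V V ℝ} {p q : ℝ≥0∞}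
  [p.HolderConjugate q]

theorem finsetLpNorm_mulVec_mul_le (hoff : ∀ i j, i ≠ j → L i j ≤ 0) {S : Finset V} {φ : V → ℝ}
    (hφ_le : ∀ v, |φ v| ≤ 1) (hφsupp : ∀ v, φ v ≠ 0 → v ∈ S)
    (hbd : ∀ e ∈ graphEdges L, ¬(e.1 ∈ S ↔ e.2 ∈ S) → graphGradient L φ e = 0) (d : V → ℝ) :
    finsetLpNorm p Finset.univ (L *ᵥ (φ * d)) ≤
      finsetLpNorm p S (localLaplacian L S d) +
        hybridLpNorm q (graphEdges L) Prod.fst (graphGradient L φ) *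
          finsetLpNorm p (inducedEdges L S) (graphGradient L d) +
        finsetLpNorm ∞ Finset.univ (standardLaplacian L *ᵥ φ) * finsetLpNorm p S d := by
  have : Fact (1 ≤ p) := ⟨ENNReal.HolderConjugate.one_le p q⟩
  set dS : V → ℝ := (S : Set V).indicator d
  have hφ_zero {v : V} (hv : v ∉ S) : φ v = 0 := not_imp_comm.1 (hφsupp v) hv
  have leibniz : L *ᵥ (φ * d) =
      φ * localLaplacian L S d + dS * (standardLaplacian L *ᵥ φ) - carreDuChamp L φ dS := by
    have hφd : φ * d = φ * dS := by
      ext v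
      by_cases hv : v ∈ S <;> simp [dS, hv, hφ_zero]
    rw [hφd, mulVec_mul_leibniz, mulVec_indicator]
  have laplacian_term : finsetLpNorm p Finset.univ (φ * localLaplacian L S d) ≤
      finsetLpNorm p S (localLaplacian L S d) := by
    refine finsetLpNorm_le_finsetLpNorm (fun v _ hv => ?_) fun v _ _ => ?_
    · rw [Pi.mul_apply, hφ_zero hv, zero_mul]
    · rw [Pi.mul_apply, norm_mul]
      exact mul_le_of_le_one_left (norm_nonneg _) (hφ_le v)
  have signal_term : finsetLpNorm p Finset.univ (dS * (standardLaplacian L *ᵥ φ)) ≤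
      finsetLpNorm ∞ Finset.univ (standardLaplacian L *ᵥ φ) * finsetLpNorm p S d := by
    refine finsetLpNorm_le_mul (finsetLpNorm_nonneg _ _) (fun v _ hv => ?_) fun v _ hv => ?_
    · simp [dS, hv]
    · have dS_eq : dS v = d v := Set.indicator_of_mem (Finset.mem_coe.2 hv) d
      rw [Pi.mul_apply, norm_mul, mul_comm, dS_eq]
      gcongr
      exact norm_le_finsetLpNorm _ (Finset.mem_univ v)
  have gradient_term : finsetLpNorm p Finset.univ (carreDuChamp L φ dS) ≤
      hybridLpNorm q (graphEdges L) Prod.fst (graphGradient L φ) *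
        finsetLpNorm p (inducedEdges L S) (graphGradient L d) := by
    rw [funext (carreDuChamp_indicator_eq_sum_inducedEdges hoff hφsupp hbd d)]
    exact finsetLpNorm_fiberwise_sum_mul_le (Finset.filter_subset _ _) Prod.fst _ _
  rw [leibniz]
  linarith [finsetLpNorm_sub_le (p := p) Finset.univ
    (φ * localLaplacian L S d + dS * (standardLaplacian L *ᵥ φ)) (carreDuChamp L φ dS),
    finsetLpNorm_add_le (p := p) Finset.univ (φ * localLaplacian L S d)
      (dS * (standardLaplacian L *ᵥ φ))]

theorem pum_global_laplacian_error_general {κ : Type*} [Fintype κ]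
    (hoff : ∀ i j, i ≠ j → L i j ≤ 0) {S : κ → Finset V} {φ : κ → V → ℝ}
    (hφ_le : ∀ j v, |φ j v| ≤ 1) (hφsupp : ∀ j v, φ j v ≠ 0 → v ∈ S j)
    (hφsum : ∀ v, ∑ j, φ j v = 1)
    (hbd : ∀ j, ∀ e ∈ graphEdges L, ¬(e.1 ∈ S j ↔ e.2 ∈ S j) → graphGradient L (φ j) e = 0)
    {x : V → ℝ} {xloc : κ → V → ℝ} {E0 E1 E2 : κ → ℝ}
    (h0 : ∀ j, finsetLpNorm p (S j) (x - xloc j) ≤ E0 j)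
    (h1 : ∀ j, finsetLpNorm p (inducedEdges L (S j)) (graphGradient L (x - xloc j)) ≤ E1 j)
    (h2 : ∀ j, finsetLpNorm p (S j) (localLaplacian L (S j) (x - xloc j)) ≤ E2 j) :
    finsetLpNorm p Finset.univ (L *ᵥ x - L *ᵥ fun u => ∑ j, φ j u * xloc j u) ≤
      ∑ j, (E2 j + hybridLpNorm q (graphEdges L) Prod.fst (graphGradient L (φ j)) * E1 j +
        finsetLpNorm ∞ Finset.univ (standardLaplacian L *ᵥ φ j) * E0 j) := by
  have : Fact (1 ≤ p) := ⟨ENNReal.HolderConjugate.one_le p q⟩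
  have : Fact (1 ≤ q) := ⟨ENNReal.HolderConjugate.one_le q p⟩
  rw [mulVec_sub_mulVec_sum_mul L hφsum]
  refine (finsetLpNorm_sum_le _ _ _).trans (Finset.sum_le_sum fun j _ => ?_)
  refine (finsetLpNorm_mulVec_mul_le (q := q) hoff (hφ_le j) (hφsupp j) (hbd j) _).trans ?_
  gcongr
  exacts [h2 j, hybridLpNorm_nonneg _ _ _, h1 j, finsetLpNorm_nonneg _ _, h0 j]

end ErrorEstimate

section FinIndexed

variable {n : ℕ} {p : ℝ≥0∞} [Fact (1 ≤ p)]

theorem lpSub_eq_finsetLpNorm (S : Finset (Fin n)) (x : Fin n → ℝ) :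
    lpSub p S x = finsetLpNorm p S x :=
  (finsetLpNorm_eq_ite S x).symm

theorem lpEdge_eq_finsetLpNorm (E : Finset (Fin n × Fin n)) (z : Fin n × Fin n → ℝ) :
    lpEdge p E z = finsetLpNorm p E z :=
  (finsetLpNorm_eq_ite E z).symm

theorem lpHybrid_eq_hybridLpNorm (E : Finset (Fin n × Fin n)) (z : Fin n × Fin n → ℝ) :
    lpHybrid p E z = hybridLpNorm p E Prod.fst z :=
  iSup_congr fun i => lpEdge_eq_finsetLpNorm {e ∈ E | e.1 = i} z

end FinIndexed

/-- Global Laplacian error estimate for PUM approximation: under the boundary condition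
`∇_L φ j (e) = 0` on all edges leaving `V_j` and the local bounds
`‖x - x_*⁽ʲ⁾‖_{ℒᵖ(G_j)} ≤ E0 j`, `‖∇_{L⁽ʲ⁾}(x - x_*⁽ʲ⁾)‖_{ℒᵖ(E_j)} ≤ E1 j`,
`‖L⁽ʲ⁾(x - x_*⁽ʲ⁾)‖_{ℒᵖ(G_j)} ≤ E2 j`, the global approximant `x_* = ∑_j φ j x_*⁽ʲ⁾`
satisfies `‖Lx - Lx_*‖_{ℒᵖ(G)} ≤ ∑_j (E2 j + ‖∇_L φ j‖_{ℒ^{∞,q}(E)} E1 j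
+ ‖L_S φ j‖_{ℒ^∞(G)} E0 j)`, where `1/p + 1/q = 1`. -/
theorem pum_global_laplacian_error
    {n : ℕ} {J : ℕ} (L : Matrix (Fin n) (Fin n) ℝ) (hsymm : L.IsSymm)
    (hoff : ∀ i j, i ≠ j → L i j ≤ 0)
    (p q : ℝ≥0∞) (hp : 1 ≤ p) (hpq : p⁻¹ + q⁻¹ = 1)
    (Vj : Fin J → Finset (Fin n)) (hcover : ∀ v, ∃ j, v ∈ Vj j)
    (φ : Fin J → Fin n → ℝ)
    (hφnonneg : ∀ j v, 0 ≤ φ j v)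
    (hφsupp : ∀ j v, φ j v ≠ 0 → v ∈ Vj j)
    (hφsum : ∀ v, ∑ j, φ j v = 1)
    (x : Fin n → ℝ) (xloc : Fin J → Fin n → ℝ) (E0 E1 E2 : Fin J → ℝ) :
    let A : Matrix (Fin n) (Fin n) ℝ := Matrix.of fun a b => if a ≠ b then -L a b else 0
    let LS : Matrix (Fin n) (Fin n) ℝ := Matrix.diagonal (fun a => ∑ b, A a b) - A
    let E : Finset (Fin n × Fin n) := Finset.univ.filter fun e => A e.1 e.2 ≠ 0
    let Ej : Fin J → Finset (Fin n × Fin n) :=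
      fun j => E.filter fun e => e.1 ∈ Vj j ∧ e.2 ∈ Vj j
    let grad : (Fin n → ℝ) → Fin n × Fin n → ℝ :=
      fun z e => Real.sqrt (A e.1 e.2) * (z e.1 - z e.2)
    -- local Laplacian `L⁽ʲ⁾`: principal submatrix of `L` on `V_j`, acting on signals
    let locLap : Fin J → (Fin n → ℝ) → Fin n → ℝ :=
      fun j z v => ∑ w ∈ Vj j, L v w * z w
    -- boundary condition for the partition of unity
    (∀ j, ∀ e ∈ E, e.1 ∈ Vj j → e.2 ∉ Vj j → grad (φ j) e = 0) →
    -- local error bounds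
    (∀ j, lpSub p (Vj j) (fun v => x v - xloc j v) ≤ E0 j) →
    (∀ j, lpEdge p (Ej j) (grad fun v => x v - xloc j v) ≤ E1 j) →
    (∀ j, lpSub p (Vj j) (locLap j fun v => x v - xloc j v) ≤ E2 j) →
    lpSub p Finset.univ
        (fun v => L.mulVec x v - L.mulVec (fun u => ∑ j, φ j u * xloc j u) v) ≤
      ∑ j, (E2 j + lpHybrid q E (grad (φ j)) * E1 j +
        lpSub ∞ Finset.univ (LS.mulVec (φ j)) * E0 j) := by
  intro A LS E Ej grad locLap hbd h0 h1 h2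
  have : p.HolderConjugate q := ⟨by simpa using hpq⟩
  have : Fact (1 ≤ p) := ⟨hp⟩
  have : Fact (1 ≤ q) := ⟨ENNReal.HolderConjugate.one_le q p⟩
  have hφ_le (j v) : |φ j v| ≤ 1 := by
    rw [abs_of_nonneg (hφnonneg j v), ← hφsum v]
    exact Finset.single_le_sum (fun i _ => hφnonneg i v) (Finset.mem_univ j)
  have hcross (j) (e) (he : e ∈ graphEdges L) (hS : ¬(e.1 ∈ Vj j ↔ e.2 ∈ Vj j)) :
      graphGradient L (φ j) e = 0 :=
    graphGradient_eq_zero_of_cross hsymm (hbd j) he hS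
  simp only [lpSub_eq_finsetLpNorm, lpEdge_eq_finsetLpNorm, lpHybrid_eq_hybridLpNorm]
    at h0 h1 h2 ⊢
  exact pum_global_laplacian_error_general hoff hφ_le hφsupp hφsum hcross h0 h1 h2
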